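/- Entropy ejection vanishes as precondition certainty approaches unity: Let C_I and C_F be finite types, O : C_I → C_F a function, and A ⊆ C_I a subset on which O is injective. Let (P_n) be a sequence of probability distributions on C_I such that the total probability mass assigned to A tends to 1, i.e. ∑_{c ∈ A} P_n c → 1 as n → ∞. Then the entropy ejected tends to zero: H(P_n) - H(O_* P_n) → 0 as n → ∞. -/

import Mathlib

open Finset Filter

/-- Shannon entropy (in nats) of a probability distribution on a finite type. -/
noncomputable def entropy {σ : Type*} [Fintype σ] (p : σ → ℝ) : ℝ :=
  ∑ s, Real.negMulLog (p s)

/-- Pushforward of a distribution along a map between finite types. -/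
noncomputable def pushforward {σ γ : Type*} [Fintype σ] [DecidableEq γ]
    (f : σ → γ) (p : σ → ℝ) : γ → ℝ :=
  fun c => ∑ s ∈ Finset.univ.filter (fun s => f s = c), p s

/-!
Write `q` for the pushforward of `p` along `f`. The entropy ejected is a conditional entropy,
`∑ s, p s * (log (q (f s)) - log (p s))`, so it is nonnegative. A summand with `s ∉ A` is at most
`negMulLog (p s)`, since `q ≤ 1`. A summand with `s ∈ A` is at most `q (f s) - p s`, since
`log x ≤ x - 1`; as `f` is injective on `A`, these differences add up to at most the mass that `p`
gives to `Aᶜ`. Hence the entropy ejected is bounded by a continuous function of the part of `p`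
outside `A`, and this function vanishes at `0`.
-/

open scoped Topology

theorem mul_log_sub_log_le_sub {x y : ℝ} (hx : 0 ≤ x) (hxy : x ≤ y) :
    x * (Real.log y - Real.log x) ≤ y - x := by
  rcases hx.eq_or_lt with rfl | hx
  · simpa only [zero_mul, sub_zero] using hxy
  · have hy : 0 < y := hx.trans_le hxy
    calc x * (Real.log y - Real.log x) = x * Real.log (y / x) := by
          rw [Real.log_div hy.ne' hx.ne']
      _ ≤ x * (y / x - 1) := by
          gcongr
          exact Real.log_le_sub_one_of_pos (div_pos hy hx)
      _ = y - x := by field_simp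

section Entropy

variable {σ : Type*} [Fintype σ] {p : σ → ℝ}

theorem sum_indicator_compl_coe (A : Finset σ) (p : σ → ℝ) :
    ∑ s, (A : Set σ)ᶜ.indicator p s = ∑ s, p s - ∑ s ∈ A, p s := by
  classical
  rw [← Finset.coe_compl, Finset.sum_indicator_subset p (Finset.subset_univ Aᶜ),
    ← Finset.sum_compl_add_sum A, add_sub_cancel_right]

theorem indicator_compl_le_sum_sub_sum (hp : ∀ s, 0 ≤ p s) (A : Finset σ) (s : σ) :
    (A : Set σ)ᶜ.indicator p s ≤ ∑ t, p t - ∑ t ∈ A, p t := by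
  rw [← sum_indicator_compl_coe]
  exact Finset.single_le_sum (fun t _ => Set.indicator_nonneg (fun t _ => hp t) t)
    (Finset.mem_univ s)

theorem tendsto_indicator_compl_zero {ι : Type*} {l : Filter ι} {P : ι → σ → ℝ}
    {A : ι → Finset σ} (hP : ∀ i s, 0 ≤ P i s) (hsum : ∀ i, ∑ s, P i s ≤ 1)
    (hA : Tendsto (fun i => ∑ s ∈ A i, P i s) l (𝓝 1)) :
    Tendsto (fun i => (A i : Set σ)ᶜ.indicator (P i)) l (𝓝 0) := by
  have h_defect : Tendsto (fun i => 1 - ∑ s ∈ A i, P i s) l (𝓝 0) := by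
    simpa only [sub_self] using hA.const_sub 1
  refine tendsto_pi_nhds.2 fun s => squeeze_zero
    (fun i => Set.indicator_nonneg (fun t _ => hP i t) s) (fun i => ?_) h_defect
  exact (indicator_compl_le_sum_sub_sum (hP i) (A i) s).trans (sub_le_sub_right (hsum i) _)

theorem continuous_entropy : Continuous (entropy : (σ → ℝ) → ℝ) :=
  continuous_finsetSum _ fun s _ => Real.continuous_negMulLog.comp (continuous_apply s)

theorem entropy_zero : entropy (0 : σ → ℝ) = 0 :=
  Finset.sum_eq_zero fun _ _ => Real.negMulLog_zero

end Entropy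

section Pushforward

variable {σ γ : Type*} [Fintype σ] [DecidableEq γ] {f : σ → γ} {p : σ → ℝ}

theorem pushforward_nonneg (hp : ∀ s, 0 ≤ p s) (c : γ) : 0 ≤ pushforward f p c :=
  Finset.sum_nonneg fun s _ => hp s

theorem le_pushforward_apply (hp : ∀ s, 0 ≤ p s) (s : σ) : p s ≤ pushforward f p (f s) :=
  Finset.single_le_sum (fun t _ => hp t) (Finset.mem_filter.2 ⟨Finset.mem_univ s, rfl⟩)

theorem pushforward_le_sum (hp : ∀ s, 0 ≤ p s) (c : γ) : pushforward f p c ≤ ∑ s, p s :=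
  Finset.sum_le_sum_of_subset_of_nonneg (Finset.filter_subset _ _) fun s _ _ => hp s

theorem sum_pushforward_apply_le {A : Finset σ} (hp : ∀ s, 0 ≤ p s) (hf : Set.InjOn f A) :
    ∑ s ∈ A, pushforward f p (f s) ≤ ∑ s, p s := by
  rw [← Finset.sum_image hf]
  exact Finset.sum_fiberwise_le_sum_of_sum_fiber_nonneg fun c _ => pushforward_nonneg hp c

theorem mul_log_pushforward_sub_log_le_negMulLog (hp : ∀ s, 0 ≤ p s) (hsum : ∑ s, p s ≤ 1)
    (s : σ) :
    p s * (Real.log (pushforward f p (f s)) - Real.log (p s)) ≤ Real.negMulLog (p s) := by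
  have h_log : Real.log (pushforward f p (f s)) ≤ 0 :=
    Real.log_nonpos (pushforward_nonneg hp _) ((pushforward_le_sum hp _).trans hsum)
  rw [Real.negMulLog]
  linarith [mul_nonpos_of_nonneg_of_nonpos (hp s) h_log]

variable [Fintype γ]

theorem sum_pushforward_mul (f : σ → γ) (p : σ → ℝ) (g : γ → ℝ) :
    ∑ c, pushforward f p c * g c = ∑ s, p s * g (f s) := by
  rw [← Finset.sum_fiberwise Finset.univ f]
  refine Finset.sum_congr rfl fun c _ => ?_
  rw [pushforward, Finset.sum_mul]
  exact Finset.sum_congr rfl fun s hs => by rw [(Finset.mem_filter.1 hs).2]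

theorem entropy_sub_entropy_pushforward (f : σ → γ) (p : σ → ℝ) :
    entropy p - entropy (pushforward f p) =
      ∑ s, p s * (Real.log (pushforward f p (f s)) - Real.log (p s)) := by
  have h_push : entropy (pushforward f p) = -∑ s, p s * Real.log (pushforward f p (f s)) := by
    simp only [entropy, Real.negMulLog_eq_neg, Finset.sum_neg_distrib,
      sum_pushforward_mul f p fun c => Real.log (pushforward f p c)]
  rw [h_push, sub_neg_eq_add]
  simp only [entropy, Real.negMulLog_eq_neg, Finset.sum_neg_distrib, mul_sub,
    Finset.sum_sub_distrib]
  ring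

theorem entropy_pushforward_le (hp : ∀ s, 0 ≤ p s) :
    entropy (pushforward f p) ≤ entropy p := by
  rw [← sub_nonneg, entropy_sub_entropy_pushforward]
  refine Finset.sum_nonneg fun s _ => ?_
  rcases (hp s).eq_or_lt with hs | hs
  · rw [← hs, zero_mul]
  · exact mul_nonneg hs.le (sub_nonneg.2 (Real.log_le_log hs (le_pushforward_apply hp s)))

theorem entropy_sub_entropy_pushforward_le {A : Finset σ} (hp : ∀ s, 0 ≤ p s)
    (hsum : ∑ s, p s ≤ 1) (hf : Set.InjOn f A) :
    entropy p - entropy (pushforward f p) ≤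
      ∑ s, (A : Set σ)ᶜ.indicator p s + entropy ((A : Set σ)ᶜ.indicator p) := by
  classical
  let q := pushforward f p
  let t : σ → ℝ := fun s => p s * (Real.log (q (f s)) - Real.log (p s))
  have h_inside : ∑ s ∈ A, t s ≤ ∑ s, (A : Set σ)ᶜ.indicator p s :=
    calc ∑ s ∈ A, t s ≤ ∑ s ∈ A, (q (f s) - p s) :=
          Finset.sum_le_sum fun s _ => mul_log_sub_log_le_sub (hp s) (le_pushforward_apply hp s)
      _ = ∑ s ∈ A, q (f s) - ∑ s ∈ A, p s := Finset.sum_sub_distrib _ _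
      _ ≤ ∑ s, p s - ∑ s ∈ A, p s := sub_le_sub_right (sum_pushforward_apply_le hp hf) _
      _ = ∑ s, (A : Set σ)ᶜ.indicator p s := (sum_indicator_compl_coe A p).symm
  have h_outside : ∑ s ∈ Aᶜ, t s ≤ entropy ((A : Set σ)ᶜ.indicator p) :=
    calc ∑ s ∈ Aᶜ, t s ≤ ∑ s ∈ Aᶜ, Real.negMulLog (p s) :=
          Finset.sum_le_sum fun s _ => mul_log_pushforward_sub_log_le_negMulLog hp hsum s
      _ = entropy ((A : Set σ)ᶜ.indicator p) := by
          rw [← Finset.coe_compl, entropy]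
          exact (Finset.sum_indicator_subset_of_eq_zero p (fun _ => Real.negMulLog)
            (Finset.subset_univ Aᶜ) fun _ => Real.negMulLog_zero).symm
  calc entropy p - entropy q = ∑ s, t s := entropy_sub_entropy_pushforward f p
    _ = ∑ s ∈ A, t s + ∑ s ∈ Aᶜ, t s := (Finset.sum_add_sum_compl A t).symm
    _ ≤ _ := add_le_add h_inside h_outside

end Pushforward

theorem entropy_ejection_vanishes_general {ι CI CF : Type*} [Fintype CI] [Fintype CF]
    [DecidableEq CF] {l : Filter ι} (O : ι → CI → CF) (A : ι → Finset CI)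
    (hinj : ∀ i, Set.InjOn (O i) (A i)) (P : ι → CI → ℝ) (hP : ∀ i c, 0 ≤ P i c)
    (hsum : ∀ i, ∑ c, P i c ≤ 1) (hcert : Tendsto (fun i => ∑ c ∈ A i, P i c) l (𝓝 1)) :
    Tendsto (fun i => entropy (P i) - entropy (pushforward (O i) (P i))) l (𝓝 0) := by
  have h_cont : Continuous fun r : CI → ℝ => ∑ c, r c + entropy r :=
    (continuous_finsetSum _ fun c _ => continuous_apply c).add continuous_entropy
  have h_bound := (h_cont.tendsto 0).comp (tendsto_indicator_compl_zero hP hsum hcert)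
  simp only [Pi.zero_apply, Finset.sum_const_zero, entropy_zero, add_zero] at h_bound
  exact squeeze_zero (fun i => sub_nonneg.2 (entropy_pushforward_le (hP i)))
    (fun i => entropy_sub_entropy_pushforward_le (hP i) (hsum i) (hinj i)) h_bound

/-- Entropy ejection vanishes as precondition certainty approaches unity:
if the probability mass that the operating contexts `P n` assign to a
precondition `A` for reversibility of `O` tends to 1, then the entropy
ejected tends to 0. -/
theorem entropy_ejection_vanishes
    {CI CF : Type*} [Fintype CI] [Fintype CF] [DecidableEq CF]
    (O : CI → CF) (A : Finset CI) (hinj : Set.InjOn O ↑A)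
    (P : ℕ → CI → ℝ)
    (hP : ∀ n c, 0 ≤ P n c) (hsum : ∀ n, ∑ c, P n c = 1)
    (hcert : Tendsto (fun n => ∑ c ∈ A, P n c) atTop (nhds 1)) :
    Tendsto (fun n => entropy (P n) - entropy (pushforward O (P n))) atTop (nhds 0) :=
  entropy_ejection_vanishes_general (fun _ => O) (fun _ => A) (fun _ => hinj) P hP
    (fun n => (hsum n).le) hcert
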